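/- In the compact setting described in the context, a root α ∈ Φ belongs to Φ₁ ∪ Φ₂ if and only if α vanishes identically on 𝔱₀, i.e. α(Y) = 0 for all Y ∈ 𝔱₀. -/

import Mathlib

open scoped TensorProduct

/-- The root space `𝔤_θ ⊆ 𝔤_ℂ = ℂ ⊗[ℝ] L` of an ℝ-linear map `θ : 𝔱 → ℂ`:
`{Z | [H, Z] = θ(H)·Z for all H ∈ 𝔱}`. -/
def rootSet {L : Type*} [LieRing L] [LieAlgebra ℝ L]
    (t : Submodule ℝ L) (θ : t →ₗ[ℝ] ℂ) : Set (ℂ ⊗[ℝ] L) :=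
  {Z | ∀ H : t, ⁅(1 : ℂ) ⊗ₜ[ℝ] (H : L), Z⁆ = θ H • Z}

/-- `θ ∈ Φ`: `θ` is a root, i.e. `θ ≠ 0` and `𝔤_θ ≠ 0`. -/
def IsRoot {L : Type*} [LieRing L] [LieAlgebra ℝ L]
    (t : Submodule ℝ L) (θ : t →ₗ[ℝ] ℂ) : Prop :=
  θ ≠ 0 ∧ ∃ Z ∈ rootSet t θ, Z ≠ 0

/-- `θ ∈ Φ₁`: `θ` is a root with `𝔤_θ ⊆ 𝔨_ℂ`. -/
def IsRoot1 {L : Type*} [LieRing L] [LieAlgebra ℝ L]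
    (t k : Submodule ℝ L) (θ : t →ₗ[ℝ] ℂ) : Prop :=
  IsRoot t θ ∧ rootSet t θ ⊆ (k.baseChange ℂ : Set (ℂ ⊗[ℝ] L))

/-- `θ ∈ Φ₂`: `θ` is a root with `𝔤_θ ⊆ 𝔭_ℂ`. -/
def IsRoot2 {L : Type*} [LieRing L] [LieAlgebra ℝ L]
    (t p : Submodule ℝ L) (θ : t →ₗ[ℝ] ℂ) : Prop :=
  IsRoot t θ ∧ rootSet t θ ⊆ (p.baseChange ℂ : Set (ℂ ⊗[ℝ] L))

/-- `θ ∈ Φ₃ = Φ \ (Φ₁ ∪ Φ₂)`. -/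
def IsRoot3 {L : Type*} [LieRing L] [LieAlgebra ℝ L]
    (t k p : Submodule ℝ L) (θ : t →ₗ[ℝ] ℂ) : Prop :=
  IsRoot t θ ∧ ¬IsRoot1 t k θ ∧ ¬IsRoot2 t p θ


section Helpers

variable {L : Type*} [LieRing L] [LieAlgebra ℝ L]

lemma aux_kinv (x y z : L) : killingForm ℝ L ⁅x, y⁆ z = killingForm ℝ L x ⁅y, z⁆ :=
  LieModule.traceForm_apply_lie_apply ℝ L L x y z

lemma aux_kcomm (x y : L) : killingForm ℝ L x y = killingForm ℝ L y x :=
  LieModule.traceForm_comm ℝ L L x y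

lemma aux_perp (σ : L →ₗ⁅ℝ⁆ L) (hσinv : ∀ x, σ (σ x) = x) (x y : L) (hx : σ x = x)
    (hy : σ y = -y) : killingForm ℝ L x y = 0 := by
  let e : L ≃ₗ⁅ℝ⁆ L := { σ with invFun := σ, left_inv := hσinv, right_inv := hσinv }
  have h := LieAlgebra.killingForm_of_equiv_apply (R := ℝ) e x y
  have h1 : e x = x := hx
  have h2 : e y = -y := hy
  rw [h1, h2, map_neg] at h
  linarith

lemma aux_max (t : Submodule ℝ L)
    (htab : ∀ x ∈ t, ∀ y ∈ t, ⁅x, y⁆ = 0)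
    (htmax : ∀ s : Submodule ℝ L, (∀ x ∈ s, ∀ y ∈ s, ⁅x, y⁆ = 0) → t ≤ s → s = t)
    (u : L) (hu : ∀ H ∈ t, ⁅H, u⁆ = 0) : u ∈ t := by
  have hu' : ∀ H ∈ t, ⁅u, H⁆ = 0 := fun H hH => by rw [← lie_skew, hu H hH, neg_zero]
  have := htmax (t ⊔ Submodule.span ℝ {u}) ?_ le_sup_left
  · rw [← this]
    exact Submodule.mem_sup_right (Submodule.mem_span_singleton_self u)
  · intro x hx y hy
    obtain ⟨x1, hx1, x2, hx2, rfl⟩ := Submodule.mem_sup.1 hx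
    obtain ⟨y1, hy1, y2, hy2, rfl⟩ := Submodule.mem_sup.1 hy
    obtain ⟨r, rfl⟩ := Submodule.mem_span_singleton.1 hx2
    obtain ⟨s, rfl⟩ := Submodule.mem_span_singleton.1 hy2
    simp [htab x1 hx1 y1 hy1, hu x1 hx1, hu' y1 hy1]

lemma aux_real (hkill : ∀ x : L, x ≠ 0 → killingForm ℝ L x x < 0)
    (t : Submodule ℝ L)
    (htab : ∀ x ∈ t, ∀ y ∈ t, ⁅x, y⁆ = 0)
    (htmax : ∀ s : Submodule ℝ L, (∀ x ∈ s, ∀ y ∈ s, ⁅x, y⁆ = 0) → t ≤ s → s = t)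
    (l : t → ℝ) (hl : ∃ H, l H ≠ 0) (a b c d : L)
    (ha : ∀ H : t, ⁅(H : L), a⁆ = -(l H • b)) (hb : ∀ H : t, ⁅(H : L), b⁆ = l H • a)
    (hc : ∀ H : t, ⁅(H : L), c⁆ = -(l H • d)) (hd : ∀ H : t, ⁅(H : L), d⁆ = l H • c)
    (hac : killingForm ℝ L a c = 0) (had : killingForm ℝ L a d = 0)
    (hbc : killingForm ℝ L b c = 0) (hbd : killingForm ℝ L b d = 0)
    (hcd : ¬ (c = 0 ∧ d = 0)) : a = 0 ∧ b = 0 := by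
  obtain ⟨H0, hH0⟩ := hl
  have hc' : ∀ H : t, ⁅c, (H : L)⁆ = l H • d := fun H => by rw [← lie_skew, hc, neg_neg]
  have hd' : ∀ H : t, ⁅d, (H : L)⁆ = -(l H • c) := fun H => by rw [← lie_skew, hd]
  have hb' : ∀ H : t, ⁅b, (H : L)⁆ = -(l H • a) := fun H => by rw [← lie_skew, hb]
  have zero_of : ∀ u ∈ t, (∀ H : t, killingForm ℝ L u H = 0) → u = 0 := by
    intro u hu h
    by_contra hne
    have := hkill u hne
    rw [h ⟨u, hu⟩] at this
    exact lt_irrefl _ this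
  have hu : ⁅a, c⁆ + ⁅b, d⁆ = 0 := by
    apply zero_of
    · apply aux_max t htab htmax
      intro H hH
      have e1 := ha ⟨H, hH⟩
      have e2 := hb ⟨H, hH⟩
      have e3 := hc ⟨H, hH⟩
      have e4 := hd ⟨H, hH⟩
      simp only at e1 e2 e3 e4
      rw [lie_add, leibniz_lie H, leibniz_lie H, e1, e2, e3, e4]
      simp only [neg_lie, lie_neg, smul_lie, lie_smul]
      abel
    · intro H
      rw [map_add, LinearMap.add_apply, aux_kinv, aux_kinv, hc', hd']
      simp [had, hbc]
  have hv : ⁅a, d⁆ - ⁅b, c⁆ = 0 := by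
    apply zero_of
    · apply aux_max t htab htmax
      intro H hH
      have e1 := ha ⟨H, hH⟩
      have e2 := hb ⟨H, hH⟩
      have e3 := hc ⟨H, hH⟩
      have e4 := hd ⟨H, hH⟩
      simp only at e1 e2 e3 e4
      rw [lie_sub, leibniz_lie H, leibniz_lie H, e1, e2, e3, e4]
      simp only [neg_lie, lie_neg, smul_lie, lie_smul]
      abel
    · intro H
      rw [map_sub, LinearMap.sub_apply, aux_kinv, aux_kinv, hc', hd']
      simp [hac, hbd]
  have hab : a = 0 → b = 0 := by
    rintro rfl
    have := ha H0
    rw [lie_zero, eq_comm, neg_eq_zero, smul_eq_zero] at this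
    exact this.resolve_left hH0
  have hdc : d = 0 → c = 0 := by
    rintro rfl
    have := hd H0
    rw [lie_zero, eq_comm, smul_eq_zero] at this
    exact this.resolve_left hH0
  by_contra hne
  have ha0 : a ≠ 0 := fun h => hne ⟨h, hab h⟩
  have hd0 : d ≠ 0 := fun h => hcd ⟨hdc h, h⟩
  have he : ⁅a, b⁆ ∈ t := by
    apply aux_max t htab htmax
    intro H hH
    have e1 := ha ⟨H, hH⟩
    have e2 := hb ⟨H, hH⟩
    simp only at e1 e2
    rw [leibniz_lie H, e1, e2]
    simp
  have hkeH : ∀ H : t, killingForm ℝ L ⁅a, b⁆ H = -(l H * killingForm ℝ L a a) := by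
    intro H
    rw [aux_kinv, hb']
    simp
  have hkaa := hkill a ha0
  have hkdd := hkill d hd0
  have he0 : ⁅a, b⁆ ≠ 0 := by
    intro h
    have := hkeH H0
    rw [h] at this
    simp only [map_zero, LinearMap.zero_apply] at this
    have h2 : l H0 * killingForm ℝ L a a ≠ 0 := mul_ne_zero hH0 hkaa.ne
    apply h2
    linarith
  have hkee := hkill _ he0
  have h1 := hkeH ⟨_, he⟩
  simp only at h1
  have hneg : l ⟨_, he⟩ < 0 := by
    by_contra hge
    push Not at hge
    nlinarith
  have h2 := hc ⟨_, he⟩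
  simp only at h2
  have hac' : ⁅a, c⁆ = -⁅b, d⁆ := eq_neg_of_add_eq_zero_left hu
  have hbc' : ⁅b, c⁆ = ⁅a, d⁆ := (sub_eq_zero.1 hv).symm
  have h3 : ⁅⁅a, b⁆, c⁆ = ⁅a, ⁅a, d⁆⁆ + ⁅b, ⁅b, d⁆⁆ := by
    rw [lie_lie, hac', hbc', lie_neg, sub_neg_eq_add]
  have h4 : ∀ x : L, 0 ≤ killingForm ℝ L ⁅x, ⁅x, d⁆⁆ d := by
    intro x
    rw [← lie_skew, map_neg, LinearMap.neg_apply, aux_kinv]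
    by_cases h : ⁅x, d⁆ = 0
    · simp [h]
    · have := hkill _ h
      linarith
  have h5 : killingForm ℝ L ⁅⁅a, b⁆, c⁆ d = -(l ⟨_, he⟩ * killingForm ℝ L d d) := by
    rw [h2]; simp
  rw [h3, map_add, LinearMap.add_apply] at h5
  have := h4 a
  have := h4 b
  nlinarith

/-- real part -/
noncomputable def reP (L : Type*) [LieRing L] [LieAlgebra ℝ L] : ℂ ⊗[ℝ] L →ₗ[ℝ] L :=
  (TensorProduct.lid ℝ L).toLinearMap ∘ₗ LinearMap.rTensor L Complex.reLm

/-- imaginary part -/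
noncomputable def imP (L : Type*) [LieRing L] [LieAlgebra ℝ L] : ℂ ⊗[ℝ] L →ₗ[ℝ] L :=
  (TensorProduct.lid ℝ L).toLinearMap ∘ₗ LinearMap.rTensor L Complex.imLm

@[simp] lemma reP_tmul (z : ℂ) (x : L) : reP L (z ⊗ₜ x) = z.re • x := by simp [reP]
@[simp] lemma imP_tmul (z : ℂ) (x : L) : imP L (z ⊗ₜ x) = z.im • x := by simp [imP]

lemma reim (Z : ℂ ⊗[ℝ] L) : Z = (1 : ℂ) ⊗ₜ[ℝ] reP L Z + Complex.I ⊗ₜ[ℝ] imP L Z := by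
  induction Z with
  | zero => simp
  | add x y hx hy =>
    rw [map_add, map_add, TensorProduct.tmul_add, TensorProduct.tmul_add]
    nth_rw 1 [hx, hy]
    abel
  | tmul z x =>
    rw [reP_tmul, imP_tmul, ← TensorProduct.smul_tmul, ← TensorProduct.smul_tmul,
      ← TensorProduct.add_tmul]
    congr 1
    apply Complex.ext <;> simp

lemma reP_lie (x : L) (Z : ℂ ⊗[ℝ] L) : reP L ⁅(1 : ℂ) ⊗ₜ[ℝ] x, Z⁆ = ⁅x, reP L Z⁆ := by
  induction Z with
  | zero =>
    have h : ⁅(1 : ℂ) ⊗ₜ[ℝ] x, (0 : ℂ ⊗[ℝ] L)⁆ = 0 := lie_zero (L := ℂ ⊗[ℝ] L) (M := ℂ ⊗[ℝ] L) _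
    rw [h, map_zero, lie_zero]
  | add y z hy hz =>
    have h : ⁅(1 : ℂ) ⊗ₜ[ℝ] x, y + z⁆ = ⁅(1 : ℂ) ⊗ₜ[ℝ] x, y⁆ + ⁅(1 : ℂ) ⊗ₜ[ℝ] x, z⁆ :=
      lie_add (L := ℂ ⊗[ℝ] L) (M := ℂ ⊗[ℝ] L) _ _ _
    rw [h, map_add, map_add, lie_add, hy, hz]
  | tmul z x => simp

lemma imP_lie (x : L) (Z : ℂ ⊗[ℝ] L) : imP L ⁅(1 : ℂ) ⊗ₜ[ℝ] x, Z⁆ = ⁅x, imP L Z⁆ := by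
  induction Z with
  | zero =>
    have h : ⁅(1 : ℂ) ⊗ₜ[ℝ] x, (0 : ℂ ⊗[ℝ] L)⁆ = 0 := lie_zero (L := ℂ ⊗[ℝ] L) (M := ℂ ⊗[ℝ] L) _
    rw [h, map_zero, lie_zero]
  | add y z hy hz =>
    have h : ⁅(1 : ℂ) ⊗ₜ[ℝ] x, y + z⁆ = ⁅(1 : ℂ) ⊗ₜ[ℝ] x, y⁆ + ⁅(1 : ℂ) ⊗ₜ[ℝ] x, z⁆ :=
      lie_add (L := ℂ ⊗[ℝ] L) (M := ℂ ⊗[ℝ] L) _ _ _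
    rw [h, map_add, map_add, lie_add, hy, hz]
  | tmul z x => simp

lemma reP_smul (w : ℂ) (Z : ℂ ⊗[ℝ] L) : reP L (w • Z) = w.re • reP L Z - w.im • imP L Z := by
  induction Z with
  | zero => simp
  | add x y hx hy => simp only [smul_add, map_add, hx, hy]; abel
  | tmul z x => simp [TensorProduct.smul_tmul', sub_smul, mul_smul]

lemma imP_smul (w : ℂ) (Z : ℂ ⊗[ℝ] L) : imP L (w • Z) = w.re • imP L Z + w.im • reP L Z := by
  induction Z with
  | zero => simp
  | add x y hx hy => simp only [smul_add, map_add, hx, hy]; abel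
  | tmul z x => simp [TensorProduct.smul_tmul', add_smul, mul_smul]

lemma mem_bc (q : Submodule ℝ L) (Z : ℂ ⊗[ℝ] L) :
    Z ∈ q.baseChange ℂ ↔ reP L Z ∈ q ∧ imP L Z ∈ q := by
  constructor
  · intro h
    rw [Submodule.baseChange_eq_span] at h
    induction h using Submodule.span_induction with
    | mem x hx =>
      obtain ⟨y, hy, rfl⟩ := hx
      simpa using hy
    | zero => simp
    | add x y _ _ hx hy =>
      simp only [map_add]
      exact ⟨q.add_mem hx.1 hy.1, q.add_mem hx.2 hy.2⟩
    | smul w x _ hx =>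
      rw [reP_smul, imP_smul]
      exact ⟨q.sub_mem (q.smul_mem _ hx.1) (q.smul_mem _ hx.2),
        q.add_mem (q.smul_mem _ hx.2) (q.smul_mem _ hx.1)⟩
  · rintro ⟨h1, h2⟩
    rw [reim Z]
    exact Submodule.add_mem _ (Submodule.tmul_mem_baseChange_of_mem _ h1)
      (Submodule.tmul_mem_baseChange_of_mem _ h2)

lemma root_eqs {t : Submodule ℝ L} {α : t →ₗ[ℝ] ℂ} {Z : ℂ ⊗[ℝ] L} (hZ : Z ∈ rootSet t α) (H : t) :
    ⁅(H : L), reP L Z⁆ = (α H).re • reP L Z - (α H).im • imP L Z ∧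
    ⁅(H : L), imP L Z⁆ = (α H).re • imP L Z + (α H).im • reP L Z := by
  rw [← reP_lie, ← imP_lie, hZ H, reP_smul, imP_smul]
  exact ⟨rfl, rfl⟩

lemma kself (x y : L) : killingForm ℝ L ⁅x, y⁆ y = 0 := by
  rw [aux_kinv, lie_self, map_zero]

lemma root_re (hkill : ∀ x : L, x ≠ 0 → killingForm ℝ L x x < 0)
    {t : Submodule ℝ L} {α : t →ₗ[ℝ] ℂ} (hα : IsRoot t α) (H : t) : (α H).re = 0 := by
  obtain ⟨-, Z, hZ, hZ0⟩ := hα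
  obtain ⟨h1, h2⟩ := root_eqs hZ H
  have k1 := kself (H : L) (reP L Z)
  have k2 := kself (H : L) (imP L Z)
  rw [h1] at k1
  rw [h2] at k2
  simp only [map_sub, map_add, map_smul, LinearMap.sub_apply, LinearMap.add_apply,
    LinearMap.smul_apply, smul_eq_mul] at k1 k2
  rw [aux_kcomm (imP L Z) (reP L Z)] at k1
  have hle : ∀ x : L, killingForm ℝ L x x ≤ 0 := fun x => by
    by_cases h : x = 0
    · simp [h]
    · exact (hkill x h).le
  have hs : killingForm ℝ L (reP L Z) (reP L Z) + killingForm ℝ L (imP L Z) (imP L Z) < 0 := by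
    by_cases h : reP L Z = 0
    · have h' : imP L Z ≠ 0 := by
        intro h'
        apply hZ0
        rw [reim Z, h, h']
        simp
      linarith [hle (reP L Z), hkill _ h']
    · linarith [hle (imP L Z), hkill _ h]
  have : (α H).re * (killingForm ℝ L (reP L Z) (reP L Z) +
      killingForm ℝ L (imP L Z) (imP L Z)) = 0 := by linarith
  exact (mul_eq_zero.1 this).resolve_right hs.ne

end Helpers

/-- In the compact setting (`𝔤` a finite-dimensional real Lie algebra with
negative definite Killing form, `σ` an involutive automorphism with fixed subalgebra `𝔨` and
`(−1)`-eigenspace `𝔭`, `𝔱` a `σ`-stable maximal abelian subalgebra with `𝔱_K = 𝔱 ∩ 𝔨` maximal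
abelian in `𝔨` and `𝔱₀ = 𝔱 ∩ 𝔭`), a root `α ∈ Φ` belongs to `Φ₁ ∪ Φ₂` if and only if `α`
vanishes identically on `𝔱₀`. -/
theorem stmt_12 (L : Type*) [LieRing L] [LieAlgebra ℝ L] [Module.Finite ℝ L]
    (hkill : ∀ x : L, x ≠ 0 → killingForm ℝ L x x < 0)
    (σ : L →ₗ⁅ℝ⁆ L) (hσinv : ∀ x, σ (σ x) = x)
    (k p : Submodule ℝ L)
    (hk : ∀ x, x ∈ k ↔ σ x = x) (hp : ∀ x, x ∈ p ↔ σ x = -x)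
    (t : Submodule ℝ L)
    (htab : ∀ x ∈ t, ∀ y ∈ t, ⁅x, y⁆ = 0)
    (htmax : ∀ s : Submodule ℝ L, (∀ x ∈ s, ∀ y ∈ s, ⁅x, y⁆ = 0) → t ≤ s → s = t)
    (hσt : ∀ x ∈ t, σ x ∈ t)
    (tK t0 : Submodule ℝ L) (htK : tK = t ⊓ k) (ht0 : t0 = t ⊓ p)
    (htKmax : ∀ s : Submodule ℝ L, s ≤ k → (∀ x ∈ s, ∀ y ∈ s, ⁅x, y⁆ = 0) → tK ≤ s → s = tK) :
    ∀ α : t →ₗ[ℝ] ℂ, IsRoot t α →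
      ((IsRoot1 t k α ∨ IsRoot2 t p α) ↔ ∀ Y : t, (Y : L) ∈ t0 → α Y = 0) := by
  intro α hα
  have hre := root_re hkill hα
  have eqs : ∀ Z ∈ rootSet t α, ∀ H : t, ⁅(H : L), reP L Z⁆ = -((α H).im • imP L Z) ∧
      ⁅(H : L), imP L Z⁆ = (α H).im • reP L Z := by
    intro Z hZ H
    have := root_eqs hZ H
    rw [hre H] at this
    simpa using this
  have selfneg : ∀ x : L, x = -x → x = 0 := fun x hx => by
    have h : (2 : ℝ) • x = 0 := by
      rw [two_smul]
      nth_rw 1 [hx]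
      simp
    exact (smul_eq_zero.1 h).resolve_left two_ne_zero
  constructor
  · intro h Y hY
    obtain ⟨-, Z, hZ, hZ0⟩ := id hα
    rw [ht0] at hY
    have hσY := (hp _).1 hY.2
    obtain ⟨e1, e2⟩ := eqs Z hZ Y
    have key : (α Y).im • imP L Z = 0 ∧ (α Y).im • reP L Z = 0 := by
      rcases h with h | h
      · obtain ⟨m1, m2⟩ := (mem_bc k Z).1 (h.2 hZ)
        rw [hk] at m1 m2
        have f1 := congrArg σ e1
        have f2 := congrArg σ e2
        rw [LieHom.map_lie, hσY, m1, neg_lie, e1, map_neg, map_smul, m2, neg_neg] at f1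
        rw [LieHom.map_lie, hσY, m2, neg_lie, e2, map_smul, m1] at f2
        exact ⟨selfneg _ f1, selfneg _ f2.symm⟩
      · obtain ⟨m1, m2⟩ := (mem_bc p Z).1 (h.2 hZ)
        rw [hp] at m1 m2
        have f1 := congrArg σ e1
        have f2 := congrArg σ e2
        rw [LieHom.map_lie, hσY, m1, neg_lie, lie_neg, neg_neg, e1, map_neg, map_smul, m2,
          smul_neg, neg_neg] at f1
        rw [LieHom.map_lie, hσY, m2, neg_lie, lie_neg, neg_neg, e2, map_smul, m1, smul_neg] at f2
        exact ⟨selfneg _ f1.symm, selfneg _ f2⟩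
    apply Complex.ext
    · exact hre Y
    · by_contra hne
      have hne' : (α Y).im ≠ 0 := hne
      have i0 := (smul_eq_zero.1 key.1).resolve_left hne'
      have r0 := (smul_eq_zero.1 key.2).resolve_left hne'
      apply hZ0
      rw [reim Z, i0, r0]
      simp
  · intro h
    have hinv : ∀ H : t, α ⟨σ H, hσt _ H.2⟩ = α H := by
      intro H
      rw [← sub_eq_zero, ← map_sub]
      apply h
      rw [ht0]
      refine ⟨Subtype.property _, ?_⟩
      rw [SetLike.mem_coe, hp]
      simp [hσinv]
    have seqs : ∀ Z ∈ rootSet t α, ∀ H : t, ⁅(H : L), σ (reP L Z)⁆ = -((α H).im • σ (imP L Z)) ∧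
        ⁅(H : L), σ (imP L Z)⁆ = (α H).im • σ (reP L Z) := by
      intro Z hZ H
      obtain ⟨e1, e2⟩ := eqs Z hZ ⟨σ H, hσt _ H.2⟩
      rw [hinv] at e1 e2
      have f1 := congrArg σ e1
      have f2 := congrArg σ e2
      simp only [LieHom.map_lie, hσinv, map_neg, map_smul] at f1 f2
      exact ⟨f1, f2⟩
    by_cases hsub : rootSet t α ⊆ (k.baseChange ℂ : Set (ℂ ⊗[ℝ] L))
    · exact Or.inl ⟨hα, hsub⟩
    · right
      refine ⟨hα, fun W hW => ?_⟩
      rw [Set.not_subset] at hsub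
      obtain ⟨Z, hZ, hZk⟩ := hsub
      rw [SetLike.mem_coe, mem_bc, hk, hk] at hZk
      have hl : ∃ H, (α H).im ≠ 0 := by
        by_contra hcon
        push Not at hcon
        exact hα.1 (LinearMap.ext fun H => Complex.ext (hre H) (hcon H))
      have perp : ∀ x y : L, killingForm ℝ L (x + σ x) (y - σ y) = 0 := by
        intro x y
        apply aux_perp σ hσinv
        · rw [map_add, hσinv, add_comm]
        · rw [map_sub, hσinv, neg_sub]
      have key := aux_real hkill t htab htmax (fun H => (α H).im) hl
        (reP L W + σ (reP L W)) (imP L W + σ (imP L W))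
        (reP L Z - σ (reP L Z)) (imP L Z - σ (imP L Z))
        (fun H => by rw [lie_add, (eqs W hW H).1, (seqs W hW H).1, smul_add, neg_add])
        (fun H => by rw [lie_add, (eqs W hW H).2, (seqs W hW H).2, smul_add])
        (fun H => by rw [lie_sub, (eqs Z hZ H).1, (seqs Z hZ H).1, smul_sub]; abel)
        (fun H => by rw [lie_sub, (eqs Z hZ H).2, (seqs Z hZ H).2, smul_sub])
        (perp _ _) (perp _ _) (perp _ _) (perp _ _)
        (fun hcd => hZk ⟨(sub_eq_zero.1 hcd.1).symm, (sub_eq_zero.1 hcd.2).symm⟩)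
      rw [SetLike.mem_coe, mem_bc, hp, hp]
      exact ⟨eq_neg_of_add_eq_zero_right key.1, eq_neg_of_add_eq_zero_right key.2⟩
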